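/- Verification of the Laplace-domain solution for the lumped formulation (equation (4.11) satisfies (4.2)–(4.4)). Let a, λ, α, γ > 0, s > 0 and C ∈ ℝ. Set K = −λ/a² + √(λ²/a⁴ + 4s/a²), Mₛ = √(γ² + s + (α/2)K), and v(x,z) = (2γC/(γ + Mₛ))·exp((γ − Mₛ)x)·exp(−(z/2)K). Then: (i) s·v(x,z) = a²·∂²v/∂z²(x,z) − λ·∂v/∂z(x,z) for all x, z; (ii) s·v(x,0) = ∂²v/∂x²(x,0) − 2γ·∂v/∂x(x,0) + α·∂v/∂z(x,0) for all x; (iii) ∂v/∂x(0,0) − 2γ·v(0,0) = −2γC; (iv) v(x,z) → 0 as x² + z² → ∞ with x, z ≥ 0. -/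

import Mathlib

open Real Filter Set

/-!
`v` is a separated exponential `A e^{px} e^{qz}` with `p = γ − Mₛ` and `q = −K/2`, so each linear
equation it must satisfy becomes an algebraic relation between `p`, `q` and `A`: the choice of `K`
makes `s = a²q² − λq`, the choice of `Mₛ` makes `s = p² − 2γp + αq`, and the choice of the
amplitude makes `(p − 2γ)A = −2γC`. Both rates are negative, so `−(px + qz)` dominates a positive
multiple of `x + z ≥ √(x² + z²)` on the closed quadrant, which gives the decay.
-/

/-- The separated exponential of amplitude `A` with rates `p` and `q` in its two arguments; the
solution `v` is of this form. It is curried so that partial derivatives are derivatives of its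
sections. -/
noncomputable def separatedExp (A p q x z : ℝ) : ℝ :=
  A * exp (p * x) * exp (q * z)

section SeparatedExp

variable (A p q x z : ℝ)

lemma separatedExp_zero_zero : separatedExp A p q 0 0 = A := by
  simp [separatedExp]

lemma separatedExp_swap : separatedExp A p q x z = separatedExp A q p z x :=
  mul_right_comm _ _ _

lemma separatedExp_eq_mul_exp_add : separatedExp A p q x z = A * exp (p * x + q * z) := by
  rw [separatedExp, exp_add, mul_assoc]

lemma iteratedDeriv_separatedExp_right (n : ℕ) :
    iteratedDeriv n (fun z' => separatedExp A p q x z') z = q ^ n * separatedExp A p q x z := by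
  simp only [separatedExp, iteratedDeriv_const_mul_field, iteratedDeriv_exp_const_mul]
  exact mul_left_comm _ _ _

lemma iteratedDeriv_separatedExp_left (n : ℕ) :
    iteratedDeriv n (fun x' => separatedExp A p q x' z) x = p ^ n * separatedExp A p q x z := by
  simp only [separatedExp_swap A p q, iteratedDeriv_separatedExp_right]

lemma deriv_separatedExp_right :
    deriv (fun z' => separatedExp A p q x z') z = q * separatedExp A p q x z := by
  rw [← iteratedDeriv_one, iteratedDeriv_separatedExp_right, pow_one]

lemma deriv_separatedExp_left :
    deriv (fun x' => separatedExp A p q x' z) x = p * separatedExp A p q x z := by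
  rw [← iteratedDeriv_one, iteratedDeriv_separatedExp_left, pow_one]

end SeparatedExp

/-- The filter of neighbourhoods of infinity in the closed first quadrant, describing the limit
`x² + z² → ∞` with `x, z ≥ 0`. -/
def quadrantAtInfty : Filter (ℝ × ℝ) :=
  comap (fun w : ℝ × ℝ => w.1 ^ 2 + w.2 ^ 2) atTop ⊓ 𝓟 (Ici (0 : ℝ) ×ˢ Ici (0 : ℝ))

lemma eventually_nonneg_quadrantAtInfty : ∀ᶠ w in quadrantAtInfty, 0 ≤ w.1 ∧ 0 ≤ w.2 :=
  mem_inf_of_right (mem_principal_self _)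

lemma tendsto_fst_add_snd_quadrantAtInfty :
    Tendsto (fun w : ℝ × ℝ => w.1 + w.2) quadrantAtInfty atTop := by
  have hnorm : Tendsto (fun w : ℝ × ℝ => √(w.1 ^ 2 + w.2 ^ 2)) quadrantAtInfty atTop :=
    (tendsto_sqrt_atTop.comp tendsto_comap).mono_left inf_le_left
  refine tendsto_atTop_mono' _ ?_ hnorm
  filter_upwards [eventually_nonneg_quadrantAtInfty] with w ⟨hx, hz⟩
  exact sqrt_le_iff.2 ⟨add_nonneg hx hz, by linarith [add_sq w.1 w.2, mul_nonneg hx hz]⟩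

lemma tendsto_linear_quadrantAtInfty {p q : ℝ} (hp : 0 < p) (hq : 0 < q) :
    Tendsto (fun w : ℝ × ℝ => p * w.1 + q * w.2) quadrantAtInfty atTop := by
  refine tendsto_atTop_mono' _ ?_
    (tendsto_fst_add_snd_quadrantAtInfty.const_mul_atTop (lt_min hp hq))
  filter_upwards [eventually_nonneg_quadrantAtInfty] with w ⟨hx, hz⟩
  rw [mul_add]
  gcongr
  exacts [min_le_left p q, min_le_right p q]

lemma tendsto_separatedExp_quadrantAtInfty (A : ℝ) {p q : ℝ} (hp : p < 0) (hq : q < 0) :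
    Tendsto (fun w : ℝ × ℝ => separatedExp A p q w.1 w.2) quadrantAtInfty (nhds 0) := by
  have hdecay := (tendsto_exp_neg_atTop_nhds_zero.comp
    (tendsto_linear_quadrantAtInfty (neg_pos.2 hp) (neg_pos.2 hq))).const_mul A
  rw [mul_zero] at hdecay
  refine hdecay.congr fun w => ?_
  rw [separatedExp_eq_mul_exp_add, Function.comp_apply]
  ring_nf

lemma abs_lt_sqrt_of_sq_lt {x y : ℝ} (h : x ^ 2 < y) : |x| < √y :=
  lt_sqrt_of_sq_lt (by rwa [sq_abs])

lemma neg_add_sqrt_sq_add_pos (b : ℝ) {c : ℝ} (hc : 0 < c) : 0 < -b + √(b ^ 2 + c) := by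
  linarith [le_abs_self b, abs_lt_sqrt_of_sq_lt (lt_add_of_pos_right (b ^ 2) hc)]

lemma neg_add_sqrt_sq_add_quadratic {b c : ℝ} (h : 0 ≤ b ^ 2 + c) :
    (-b + √(b ^ 2 + c)) ^ 2 + 2 * b * (-b + √(b ^ 2 + c)) = c := by
  linear_combination sq_sqrt h

/-- The constant `K`: the larger root of `a²K² + 2λK = 4s`, so that `u = e^{−Kz/2}` solves
`s u = a² u'' − λ u'` and, for `s > 0`, decays as `z → ∞`. -/
noncomputable def bulkRoot (a lam s : ℝ) : ℝ :=
  -lam / a ^ 2 + √(lam ^ 2 / a ^ 4 + 4 * s / a ^ 2)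

lemma bulkRoot_eq_neg_add_sqrt (a lam s : ℝ) :
    bulkRoot a lam s = -(lam / a ^ 2) + √((lam / a ^ 2) ^ 2 + 4 * s / a ^ 2) := by
  rw [bulkRoot, neg_div, div_pow, ← pow_mul]

lemma bulkRoot_pos {a s : ℝ} (lam : ℝ) (ha : a ≠ 0) (hs : 0 < s) : 0 < bulkRoot a lam s := by
  rw [bulkRoot_eq_neg_add_sqrt]
  exact neg_add_sqrt_sq_add_pos _ (by positivity)

lemma bulkRoot_quadratic {a s : ℝ} (lam : ℝ) (ha : a ≠ 0) (hs : 0 ≤ s) :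
    a ^ 2 * bulkRoot a lam s ^ 2 + 2 * lam * bulkRoot a lam s = 4 * s := by
  have hroot :=
    neg_add_sqrt_sq_add_quadratic (b := lam / a ^ 2) (c := 4 * s / a ^ 2) (by positivity)
  rw [← bulkRoot_eq_neg_add_sqrt] at hroot
  field_simp at hroot
  linear_combination hroot

theorem laplace_domain_lumped_general (a lam α γ s C : ℝ)
    (ha : a ≠ 0) (hs : 0 < s)
    (K Ms : ℝ) (hK : K = -lam / a ^ 2 + Real.sqrt (lam ^ 2 / a ^ 4 + 4 * s / a ^ 2))
    (hMs : Ms = Real.sqrt (γ ^ 2 + s + (α / 2) * K))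
    (hdecay : 0 < s + (α / 2) * K)
    (v : ℝ → ℝ → ℝ)
    (hv : ∀ x z : ℝ, v x z =
      (2 * γ * C / (γ + Ms)) * Real.exp ((γ - Ms) * x) * Real.exp (-(z / 2) * K)) :
    (∀ x z : ℝ, s * v x z =
      a ^ 2 * iteratedDeriv 2 (fun z' => v x z') z - lam * deriv (fun z' => v x z') z) ∧
    (∀ x : ℝ, s * v x 0 =
      iteratedDeriv 2 (fun x' => v x' 0) x - 2 * γ * deriv (fun x' => v x' 0) x +
        α * deriv (fun z' => v x z') 0) ∧
    deriv (fun x' => v x' 0) 0 - 2 * γ * v 0 0 = -(2 * γ * C) ∧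
    Tendsto (fun w : ℝ × ℝ => v w.1 w.2)
      ((comap (fun w : ℝ × ℝ => w.1 ^ 2 + w.2 ^ 2) atTop) ⊓
        𝓟 (Ici (0 : ℝ) ×ˢ Ici (0 : ℝ))) (nhds 0) := by
  have hKpos : 0 < K := (bulkRoot_pos lam ha hs).trans_eq hK.symm
  have hKeq : a ^ 2 * K ^ 2 + 2 * lam * K = 4 * s := hK ▸ bulkRoot_quadratic lam ha hs.le
  have hMγ : |γ| < Ms := hMs ▸ abs_lt_sqrt_of_sq_lt (by linarith)
  have hMsq : Ms ^ 2 = γ ^ 2 + s + (α / 2) * K :=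
    hMs ▸ sq_sqrt (by linarith [sq_nonneg γ])
  have hsum : γ + Ms ≠ 0 := by linarith [neg_abs_le γ]
  have hflux : 2 * γ * C / (γ + Ms) * (γ + Ms) = 2 * γ * C := div_mul_cancel₀ _ hsum
  obtain rfl : v = separatedExp (2 * γ * C / (γ + Ms)) (γ - Ms) (-(K / 2)) := by
    ext x z
    rw [hv, separatedExp, show -(z / 2) * K = -(K / 2) * z by ring]
  refine ⟨fun x z => ?_, fun x => ?_, ?_, ?_⟩
  · rw [iteratedDeriv_separatedExp_right, deriv_separatedExp_right]
    linear_combination -separatedExp _ _ _ x z / 4 * hKeq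
  · rw [iteratedDeriv_separatedExp_left, deriv_separatedExp_left, deriv_separatedExp_right]
    linear_combination -separatedExp _ _ _ x 0 * hMsq
  · rw [deriv_separatedExp_left, separatedExp_zero_zero]
    linear_combination -hflux
  · exact tendsto_separatedExp_quadrantAtInfty _
      (sub_neg.2 ((le_abs_self γ).trans_lt hMγ)) (neg_lt_zero.2 (half_pos hKpos))

/-- Verification of the Laplace-domain solution (4.11) of the lumped formulation:
with `K = −λ/a² + √(λ²/a⁴ + 4s/a²)`, `Mₛ = √(γ² + s + (α/2)K)` and
`v(x,z) = (2γC/(γ + Mₛ)) e^{(γ − Mₛ)x} e^{−(z/2)K}`, the function `v`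
satisfies (4.2)–(4.4). -/
theorem laplace_domain_lumped (a lam α γ s C : ℝ)
    (ha : 0 < a) (hlam : 0 < lam) (hα : 0 < α) (hγ : 0 < γ) (hs : 0 < s)
    (K Ms : ℝ) (hK : K = -lam / a ^ 2 + Real.sqrt (lam ^ 2 / a ^ 4 + 4 * s / a ^ 2))
    (hMs : Ms = Real.sqrt (γ ^ 2 + s + (α / 2) * K))
    (v : ℝ → ℝ → ℝ)
    (hv : ∀ x z : ℝ, v x z =
      (2 * γ * C / (γ + Ms)) * Real.exp ((γ - Ms) * x) * Real.exp (-(z / 2) * K)) :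
    (∀ x z : ℝ, s * v x z =
      a ^ 2 * iteratedDeriv 2 (fun z' => v x z') z - lam * deriv (fun z' => v x z') z) ∧
    (∀ x : ℝ, s * v x 0 =
      iteratedDeriv 2 (fun x' => v x' 0) x - 2 * γ * deriv (fun x' => v x' 0) x +
        α * deriv (fun z' => v x z') 0) ∧
    deriv (fun x' => v x' 0) 0 - 2 * γ * v 0 0 = -(2 * γ * C) ∧
    Tendsto (fun w : ℝ × ℝ => v w.1 w.2)
      ((comap (fun w : ℝ × ℝ => w.1 ^ 2 + w.2 ^ 2) atTop) ⊓
        𝓟 (Ici (0 : ℝ) ×ˢ Ici (0 : ℝ))) (nhds 0) := by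
  have hKpos : 0 < K := (bulkRoot_pos lam ha.ne' hs).trans_eq hK.symm
  exact laplace_domain_lumped_general a lam α γ s C ha.ne' hs K Ms hK hMs (by positivity) v hv
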